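/- The six quantum channels associated to the six Hamiltonian paths of G(Π₃) are pairwise distinct: the six maps Ψ_e(X) = Σ_{k=1}^{8} S_{ek} X S_{ek}*, Ψ_f(X) = Σ_{k=1}^{5} S_{ek} X S_{ek}* + Σ_{k=6}^{8} S_{gk} X S_{gk}*, Ψ_g(X) = Σ_{k=1}^{8} S_{gk} X S_{gk}*, Ψ_h(X) = Σ_{k=1}^{5} S_{gk} X S_{gk}* + Σ_{k=6}^{8} S_{ek} X S_{ek}*, Ψ_i(X) = Σ_{k=1}^{8} S_{ik} X S_{ik}*, and Ψ_j(X) = Σ_{k=1}^{8} S_{jk} X S_{jk}*, defined on bounded operators X on H, are pairwise unequal as maps. -/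

import Mathlib

/- Hilbert space `H = ℓ²(ℕ₊, ℂ)` with standard orthonormal basis `(e m)` indexed by the
positive integers `ℕ+`. -/

noncomputable section

open ContinuousLinearMap

/-- The Hilbert space `ℓ²(ℕ₊, ℂ)` of square-summable complex sequences indexed by the
positive integers. -/
abbrev H : Type := lp (fun _ : ℕ+ => ℂ) 2

/-- The standard orthonormal basis vector `e m` of `H`, for `m ≥ 1`. -/
def e (m : ℕ+) : H := lp.single 2 m 1

/-- `MapsBasis S a b` says that the bounded operator `S` sends the basis vector `e (a n)` to
`e (b n)` for every `n ≥ 1`, and sends to `0` every basis vector not of the form `e (a n)`;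
i.e. `S = Σ_{n ≥ 1} E_{b n, a n}` as in the paper. -/
def MapsBasis (S : H →L[ℂ] H) (a b : ℕ+ → ℕ+) : Prop :=
  (∀ n : ℕ+, S (e (a n)) = e (b n)) ∧ ∀ m : ℕ+, (∀ n : ℕ+, m ≠ a n) → S (e m) = 0

/-!
An operator `S = Σ E_{b n, a n}` conjugates the diagonal matrix unit `E_{a n, a n}` to
`E_{b n, b n}` and annihilates every other `E_{m, m}`. In each of the six channels the column
indices of the eight operators are the eight progressions `8n, 8n - 1, …, 8n - 7`, which partition
`ℕ₊`; hence the channel sends each diagonal matrix unit to a diagonal matrix unit and determines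
the row indices of its operators. Comparing `E_{3,3}` and `E_{4,4}` is enough: the channels `Ψ_e`,
`Ψ_f`, `Ψ_g`, `Ψ_h`, `Ψ_i`, `Ψ_j` send this pair to the units with indices `(4, 5)`, `(10, 5)`,
`(10, 14)`, `(4, 14)`, `(4, 32)`, `(4, 39)` respectively.
-/

open InnerProductSpace Function

theorem nodup_of_forall₂_of_rightUnique {α β : Type*} {R : α → β → Prop}
    (hR : Relator.RightUnique R) {l₁ : List α} {l₂ : List β} (h : List.Forall₂ R l₁ l₂)
    (hl₂ : l₂.Nodup) : l₁.Nodup := by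
  obtain ⟨length_eq, related⟩ := List.forall₂_iff_get.1 h
  rw [List.nodup_iff_injective_get] at hl₂ ⊢
  intro i j hij
  have images_eq : l₂.get (i.cast length_eq) = l₂.get (j.cast length_eq) :=
    hR (related i i.2 (i.cast length_eq).2) (hij ▸ related j j.2 (j.cast length_eq).2)
  exact Fin.cast_injective length_eq (hl₂ images_eq)

section KrausMap

variable {𝕜 E F ι : Type*} [RCLike 𝕜]
  [NormedAddCommGroup E] [InnerProductSpace 𝕜 E] [CompleteSpace E]
  [NormedAddCommGroup F] [InnerProductSpace 𝕜 F] [CompleteSpace F]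

theorem comp_rankOne_comp_adjoint (S : E →L[𝕜] F) (x y : E) :
    S ∘L rankOne 𝕜 x y ∘L adjoint S = rankOne 𝕜 (S x) (S y) := by
  rw [rankOne_comp, comp_rankOne, adjoint_adjoint]

/-- The completely positive map `X ↦ Σ_k V_k X V_k*` with Kraus operators `V_k`. -/
def krausMap [Fintype ι] (V : ι → E →L[𝕜] F) (X : E →L[𝕜] E) : F →L[𝕜] F :=
  ∑ k, V k ∘L X ∘L adjoint (V k)

theorem krausMap_rankOne_self [Fintype ι] {V : ι → E →L[𝕜] F} {x : E} {k : ι}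
    (hV : ∀ j ≠ k, V j x = 0) :
    krausMap V (rankOne 𝕜 x x) = rankOne 𝕜 (V k x) (V k x) := by
  simp only [krausMap, comp_rankOne_comp_adjoint]
  exact Fintype.sum_eq_single k fun j hj => by simp [hV j hj]

end KrausMap

theorem rankOne_self_injective_of_orthonormal {𝕜 E ι : Type*} [RCLike 𝕜] [NormedAddCommGroup E]
    [InnerProductSpace 𝕜 E] {v : ι → E} (hv : Orthonormal 𝕜 v) :
    Injective fun i => rankOne 𝕜 (v i) (v i) := by
  intro i j hij
  by_contra hne
  have apply_eq : rankOne 𝕜 (v i) (v i) (v i) = rankOne 𝕜 (v j) (v j) (v i) :=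
    DFunLike.congr_fun hij (v i)
  have v_eq_zero : v i = 0 := by
    simpa [hv.inner_eq_zero (Ne.symm hne), hv.1 i] using apply_eq
  exact hv.ne_zero i v_eq_zero

theorem orthonormal_e : Orthonormal ℂ e := by
  rw [orthonormal_iff_ite]
  intro i j
  simp [e, lp.inner_single_left, Pi.single_apply]

/-- `MapsDiagonal Ψ a b` says that `Ψ` sends the diagonal matrix unit `E_{a k n, a k n}` to
`E_{b k n, b k n}` for all `k` and `n`. Channels are compared through this property, in which
the Kraus operators no longer appear. -/
def MapsDiagonal {ι : Type*} (Ψ : (H →L[ℂ] H) → (H →L[ℂ] H)) (a b : ι → ℕ+ → ℕ+) : Prop :=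
  ∀ k n, Ψ (rankOne ℂ (e (a k n)) (e (a k n))) = rankOne ℂ (e (b k n)) (e (b k n))

theorem MapsDiagonal.rightUnique {ι : Type*} (a : ι → ℕ+ → ℕ+) :
    Relator.RightUnique fun Ψ b => MapsDiagonal Ψ a b := by
  intro Ψ b c hb hc
  funext k n
  exact rankOne_self_injective_of_orthonormal orthonormal_e ((hb k n).symm.trans (hc k n))

theorem mapsDiagonal_krausMap {ι : Type*} [Fintype ι] {a b : ι → ℕ+ → ℕ+}
    {V : ι → H →L[ℂ] H} (hV : ∀ k, MapsBasis (V k) (a k) (b k))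
    (ha : Pairwise (Disjoint on fun k => Set.range (a k))) :
    MapsDiagonal (krausMap V) a b := by
  intro k n
  have apply_eq_zero : ∀ j ≠ k, V j (e (a k n)) = 0 := fun j hj =>
    (hV j).2 _ fun m hm => Set.disjoint_left.1 (ha hj) ⟨m, hm.symm⟩ ⟨n, rfl⟩
  rw [krausMap_rankOne_self apply_eq_zero, (hV k).1 n]

/-- The column indices of the operators on a Hamiltonian path of `G(Π₃)`: `columnIndex r n` is
`8n - r`. The values are listed because `ℕ+` has no `0` to subtract. -/
def columnIndex : Fin 8 → ℕ+ → ℕ+ :=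
  ![fun n => 8 * n, fun n => 8 * n - 1, fun n => 8 * n - 2, fun n => 8 * n - 3,
    fun n => 8 * n - 4, fun n => 8 * n - 5, fun n => 8 * n - 6, fun n => 8 * n - 7]

theorem coe_columnIndex_add (r : Fin 8) (n : ℕ+) : (columnIndex r n : ℕ) + r = 8 * n := by
  have coe_sub_add (k : ℕ+) (hk : k < 8) : ((8 * n - k : ℕ+) : ℕ) + k = 8 * n := by
    have hlt : k < 8 * n := hk.trans_le (le_mul_of_one_le_right' one_le)
    exact congrArg PNat.val (PNat.sub_add_of_lt hlt)
  fin_cases r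
  · rfl
  all_goals exact coe_sub_add _ (by decide)

theorem pairwise_disjoint_range_columnIndex :
    Pairwise (Disjoint on fun r => Set.range (columnIndex r)) := by
  intro r s hrs
  rw [onFun, Set.disjoint_left]
  rintro _ ⟨m, rfl⟩ ⟨n, hn⟩
  have hr := coe_columnIndex_add r m
  have hs := coe_columnIndex_add s n
  rw [hn] at hs
  exact hrs (Fin.ext (by omega))

theorem mapsDiagonal_columnIndex {Ψ : (H →L[ℂ] H) → (H →L[ℂ] H)}
    {S₀ S₁ S₂ S₃ S₄ S₅ S₆ S₇ : H →L[ℂ] H} {b₀ b₁ b₂ b₃ b₄ b₅ b₆ b₇ : ℕ+ → ℕ+}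
    (h₀ : MapsBasis S₀ (fun n => 8 * n) b₀) (h₁ : MapsBasis S₁ (fun n => 8 * n - 1) b₁)
    (h₂ : MapsBasis S₂ (fun n => 8 * n - 2) b₂) (h₃ : MapsBasis S₃ (fun n => 8 * n - 3) b₃)
    (h₄ : MapsBasis S₄ (fun n => 8 * n - 4) b₄) (h₅ : MapsBasis S₅ (fun n => 8 * n - 5) b₅)
    (h₆ : MapsBasis S₆ (fun n => 8 * n - 6) b₆) (h₇ : MapsBasis S₇ (fun n => 8 * n - 7) b₇)
    (hΨ : ∀ X, Ψ X = S₀ ∘L X ∘L adjoint S₀ + S₁ ∘L X ∘L adjoint S₁ + S₂ ∘L X ∘L adjoint S₂ +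
      S₃ ∘L X ∘L adjoint S₃ + S₄ ∘L X ∘L adjoint S₄ + S₅ ∘L X ∘L adjoint S₅ +
      S₆ ∘L X ∘L adjoint S₆ + S₇ ∘L X ∘L adjoint S₇) :
    MapsDiagonal Ψ columnIndex ![b₀, b₁, b₂, b₃, b₄, b₅, b₆, b₇] := by
  have Ψ_eq : Ψ = krausMap ![S₀, S₁, S₂, S₃, S₄, S₅, S₆, S₇] := by
    ext1 X
    rw [hΨ, krausMap, Fin.sum_univ_eight]
    rfl
  rw [Ψ_eq]
  refine mapsDiagonal_krausMap (fun r => ?_) pairwise_disjoint_range_columnIndex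
  fin_cases r
  exacts [h₀, h₁, h₂, h₃, h₄, h₅, h₆, h₇]

set_option maxHeartbeats 1000000 in
/-- The six quantum channels associated to the six Hamiltonian paths of `G(Π₃)` are pairwise
distinct as maps on bounded operators (here `S_{i2} = S_{e4}`, `S_{i4} = S_{g2}`,
`S_{i6} = S_{e6}`, `S_{i7} = S_{e7}`, `S_{i8} = S_{e8}`, `S_{j2} = S_{g4}`,
`S_{j4} = S_{e2}`, `S_{j6} = S_{e6}`, `S_{j7} = S_{e7}`, `S_{j8} = S_{e8}`). -/
theorem stmt_19
    (Se1 Se2 Se3 Se4 Se5 Se6 Se7 Se8 Sg1 Sg2 Sg3 Sg4 Sg5 Sg6 Sg7 Sg8 Si1 Si3 Si5 Sj1 Sj3 Sj5 : H →L[ℂ] H)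
    (hSe1 : MapsBasis Se1 (fun n => 8 * n) (fun n => 32 * n - 31))
    (hSe2 : MapsBasis Se2 (fun n => 8 * n - 1) (fun n => 40 * n - 32))
    (hSe3 : MapsBasis Se3 (fun n => 8 * n - 2) (fun n => 40 * n - 33))
    (hSe4 : MapsBasis Se4 (fun n => 8 * n - 3) (fun n => 48 * n - 42))
    (hSe5 : MapsBasis Se5 (fun n => 8 * n - 4) (fun n => 48 * n - 43))
    (hSe6 : MapsBasis Se6 (fun n => 8 * n - 5) (fun n => 32 * n - 28))
    (hSe7 : MapsBasis Se7 (fun n => 8 * n - 6) (fun n => 24 * n - 21))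
    (hSe8 : MapsBasis Se8 (fun n => 8 * n - 7) (fun n => 24 * n - 22))
    (hSg1 : MapsBasis Sg1 (fun n => 8 * n - 1) (fun n => 32 * n - 23))
    (hSg2 : MapsBasis Sg2 (fun n => 8 * n) (fun n => 40 * n - 25))
    (hSg3 : MapsBasis Sg3 (fun n => 8 * n - 3) (fun n => 40 * n - 24))
    (hSg4 : MapsBasis Sg4 (fun n => 8 * n - 2) (fun n => 48 * n - 35))
    (hSg5 : MapsBasis Sg5 (fun n => 8 * n - 4) (fun n => 48 * n - 34))
    (hSg6 : MapsBasis Sg6 (fun n => 8 * n - 5) (fun n => 24 * n - 14))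
    (hSg7 : MapsBasis Sg7 (fun n => 8 * n - 6) (fun n => 32 * n - 20))
    (hSg8 : MapsBasis Sg8 (fun n => 8 * n - 7) (fun n => 24 * n - 13))
    (hSi1 : MapsBasis Si1 (fun n => 8 * n - 2) (fun n => 32 * n - 7))
    (hSi3 : MapsBasis Si3 (fun n => 8 * n - 1) (fun n => 48 * n - 27))
    (hSi5 : MapsBasis Si5 (fun n => 8 * n - 4) (fun n => 40 * n - 8))
    (hSj1 : MapsBasis Sj1 (fun n => 8 * n - 3) (fun n => 32 * n - 15))
    (hSj3 : MapsBasis Sj3 (fun n => 8 * n) (fun n => 48 * n - 10))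
    (hSj5 : MapsBasis Sj5 (fun n => 8 * n - 4) (fun n => 40 * n - 1)) :
    List.Pairwise (· ≠ ·)
      [fun X : H →L[ℂ] H =>
        Se1 ∘L X ∘L adjoint Se1 + Se2 ∘L X ∘L adjoint Se2 + Se3 ∘L X ∘L adjoint Se3 + Se4 ∘L X ∘L adjoint Se4 + Se5 ∘L X ∘L adjoint Se5 + Se6 ∘L X ∘L adjoint Se6 + Se7 ∘L X ∘L adjoint Se7 + Se8 ∘L X ∘L adjoint Se8,
       fun X : H →L[ℂ] H =>
        Se1 ∘L X ∘L adjoint Se1 + Se2 ∘L X ∘L adjoint Se2 + Se3 ∘L X ∘L adjoint Se3 + Se4 ∘L X ∘L adjoint Se4 + Se5 ∘L X ∘L adjoint Se5 + Sg6 ∘L X ∘L adjoint Sg6 + Sg7 ∘L X ∘L adjoint Sg7 + Sg8 ∘L X ∘L adjoint Sg8,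
       fun X : H →L[ℂ] H =>
        Sg1 ∘L X ∘L adjoint Sg1 + Sg2 ∘L X ∘L adjoint Sg2 + Sg3 ∘L X ∘L adjoint Sg3 + Sg4 ∘L X ∘L adjoint Sg4 + Sg5 ∘L X ∘L adjoint Sg5 + Sg6 ∘L X ∘L adjoint Sg6 + Sg7 ∘L X ∘L adjoint Sg7 + Sg8 ∘L X ∘L adjoint Sg8,
       fun X : H →L[ℂ] H =>
        Sg1 ∘L X ∘L adjoint Sg1 + Sg2 ∘L X ∘L adjoint Sg2 + Sg3 ∘L X ∘L adjoint Sg3 + Sg4 ∘L X ∘L adjoint Sg4 + Sg5 ∘L X ∘L adjoint Sg5 + Se6 ∘L X ∘L adjoint Se6 + Se7 ∘L X ∘L adjoint Se7 + Se8 ∘L X ∘L adjoint Se8,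
       fun X : H →L[ℂ] H =>
        Si1 ∘L X ∘L adjoint Si1 + Se4 ∘L X ∘L adjoint Se4 + Si3 ∘L X ∘L adjoint Si3 + Sg2 ∘L X ∘L adjoint Sg2 + Si5 ∘L X ∘L adjoint Si5 + Se6 ∘L X ∘L adjoint Se6 + Se7 ∘L X ∘L adjoint Se7 + Se8 ∘L X ∘L adjoint Se8,
       fun X : H →L[ℂ] H =>
        Sj1 ∘L X ∘L adjoint Sj1 + Sg4 ∘L X ∘L adjoint Sg4 + Sj3 ∘L X ∘L adjoint Sj3 + Se2 ∘L X ∘L adjoint Se2 + Sj5 ∘L X ∘L adjoint Sj5 + Se6 ∘L X ∘L adjoint Se6 + Se7 ∘L X ∘L adjoint Se7 + Se8 ∘L X ∘L adjoint Se8] := by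
  -- The operators of each channel are listed by column class, not by their position on the path.
  refine nodup_of_forall₂_of_rightUnique (MapsDiagonal.rightUnique columnIndex)
    (.cons (mapsDiagonal_columnIndex hSe1 hSe2 hSe3 hSe4 hSe5 hSe6 hSe7 hSe8 fun X => rfl) <|
     .cons (mapsDiagonal_columnIndex hSe1 hSe2 hSe3 hSe4 hSe5 hSg6 hSg7 hSg8 fun X => rfl) <|
     .cons (mapsDiagonal_columnIndex hSg2 hSg1 hSg4 hSg3 hSg5 hSg6 hSg7 hSg8 fun X => by abel) <|
     .cons (mapsDiagonal_columnIndex hSg2 hSg1 hSg4 hSg3 hSg5 hSe6 hSe7 hSe8 fun X => by abel) <|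
     .cons (mapsDiagonal_columnIndex hSg2 hSi3 hSi1 hSe4 hSi5 hSe6 hSe7 hSe8 fun X => by abel) <|
     .cons (mapsDiagonal_columnIndex hSj3 hSe2 hSg4 hSj1 hSj5 hSe6 hSe7 hSe8 fun X => by abel) <|
     .nil) ?_
  -- Since `columnIndex 5 1 = 3` and `columnIndex 4 1 = 4`, this reads off the images of `E_{3,3}`
  -- and `E_{4,4}`.
  exact .of_map (fun b => (b 5 1, b 4 1)) (by decide)
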